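/- arXiv:2209.12449 — 6 statements merged into one kernel-verified Lean document; each statement's English description precedes it below -/
import Mathlib

section
/- Let λ : ℝ → ℝ be twice continuously differentiable, and let ρ, u : ℝ × ℝ → ℝ (functions of time t and space x) be smooth with ρ(t,x) > 0 and λ(ρ(t,x)) > 0 for all (t,x). Suppose that pointwise ∂_t ρ + ∂_x(ρ u) = 0 and ∂_t(ρ u) + ∂_x(ρ u²) − ∂_x(λ(ρ) ∂_x u) = 0. Then the active potential V := λ(ρ) ∂_x u satisfies pointwise ∂_t V + (u + (λ(ρ)/ρ²) ∂_x ρ) ∂_x V − (λ(ρ)/ρ) ∂_x² V = −((λ'(ρ) ρ + λ(ρ))/λ(ρ)²) V². -/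
/-!
Write `D f = ∂ₜ f + u ∂ₓ f` for the derivative along the flow. The continuity equation says
`D ρ = -ρ ∂ₓ u` and turns the momentum equation into `∂ₓ V = ρ D u`. Since `∂ₓ` and `D` commute up
to `∂ₓ (D u) = D (∂ₓ u) + (∂ₓ u)²`, the chain rule for `V = λ(ρ) ∂ₓ u` gives
`D V = λ(ρ) ∂ₓ (D u) - (λ'(ρ) ρ + λ(ρ)) (∂ₓ u)²`. Substituting `D u = ∂ₓ V / ρ` produces the
diffusion term and the correction `(λ(ρ) / ρ²) ∂ₓ ρ` to the drift.
-/

open Function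

section PartialDerivatives

variable {𝕜 E : Type*} [NontriviallyNormedField 𝕜] [NormedAddCommGroup E] [NormedSpace 𝕜 E]
  {f : 𝕜 → 𝕜 → E} {t x : 𝕜}

lemma hasDerivAt_fst_of_uncurry {f' : 𝕜 × 𝕜 →L[𝕜] E} (hf : HasFDerivAt (uncurry f) f' (t, x)) :
    HasDerivAt (fun s => f s x) (f' (1, 0)) t :=
  hf.comp_hasDerivAt (f := fun s => (s, x)) t ((hasDerivAt_id t).prodMk (hasDerivAt_const t x))

lemma hasDerivAt_snd_of_uncurry {f' : 𝕜 × 𝕜 →L[𝕜] E} (hf : HasFDerivAt (uncurry f) f' (t, x)) :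
    HasDerivAt (f t) (f' (0, 1)) x :=
  hf.comp_hasDerivAt x ((hasDerivAt_const x t).prodMk (hasDerivAt_id x))

lemma differentiableAt_fst_of_uncurry (hf : DifferentiableAt 𝕜 (uncurry f) (t, x)) :
    DifferentiableAt 𝕜 (fun s => f s x) t :=
  (hasDerivAt_fst_of_uncurry hf.hasFDerivAt).differentiableAt

lemma differentiableAt_snd_of_uncurry (hf : DifferentiableAt 𝕜 (uncurry f) (t, x)) :
    DifferentiableAt 𝕜 (f t) x :=
  (hasDerivAt_snd_of_uncurry hf.hasFDerivAt).differentiableAt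

lemma deriv_fst_eq_fderiv_uncurry (hf : DifferentiableAt 𝕜 (uncurry f) (t, x)) :
    deriv (fun s => f s x) t = fderiv 𝕜 (uncurry f) (t, x) (1, 0) :=
  (hasDerivAt_fst_of_uncurry hf.hasFDerivAt).deriv

lemma deriv_snd_eq_fderiv_uncurry (hf : DifferentiableAt 𝕜 (uncurry f) (t, x)) :
    deriv (f t) x = fderiv 𝕜 (uncurry f) (t, x) (0, 1) :=
  (hasDerivAt_snd_of_uncurry hf.hasFDerivAt).deriv

lemma contDiff_uncurry_deriv_snd {m n : WithTop ℕ∞} (hf : ContDiff 𝕜 n (uncurry f))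
    (hmn : m + 1 ≤ n) : ContDiff 𝕜 m (uncurry fun s y => deriv (f s) y) :=
  (hf.comp (contDiff_fst.fst.prodMk contDiff_snd)).fderiv_apply contDiff_snd contDiff_const hmn

lemma contDiff_uncurry_deriv_fst {m n : WithTop ℕ∞} (hf : ContDiff 𝕜 n (uncurry f))
    (hmn : m + 1 ≤ n) : ContDiff 𝕜 m (uncurry fun s y => deriv (fun r => f r y) s) :=
  (hf.comp (contDiff_snd.prodMk contDiff_fst.snd)).fderiv_apply contDiff_fst contDiff_const hmn

lemma deriv_fst_deriv_snd_comm {n : WithTop ℕ∞} (hf : ContDiff 𝕜 n (uncurry f))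
    (hn : minSmoothness 𝕜 2 ≤ n) :
    deriv (fun s => deriv (f s) x) t = deriv (fun y => deriv (fun s => f s y) t) x := by
  have h2n : 2 ≤ n := le_minSmoothness.trans hn
  have hf_diff : Differentiable 𝕜 (uncurry f) :=
    hf.differentiable (zero_lt_two.trans_le h2n).ne'
  have hDf : HasFDerivAt (fderiv 𝕜 (uncurry f)) (fderiv 𝕜 (fderiv 𝕜 (uncurry f)) (t, x)) (t, x) :=
    ((hf.fderiv_right (m := 1) (by simpa [one_add_one_eq_two] using h2n)).differentiable
      one_ne_zero _).hasFDerivAt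
  have hsymm : IsSymmSndFDerivAt 𝕜 (uncurry f) (t, x) := hf.contDiffAt.isSymmSndFDerivAt hn
  have hts := hasDerivAt_fst_of_uncurry (f := fun s y => fderiv 𝕜 (uncurry f) (s, y)) hDf
  have hxs := hasDerivAt_snd_of_uncurry (f := fun s y => fderiv 𝕜 (uncurry f) (s, y)) hDf
  simp only [deriv_fst_eq_fderiv_uncurry (hf_diff _), deriv_snd_eq_fderiv_uncurry (hf_diff _)]
  rw [(hts.clm_apply (hasDerivAt_const t _)).deriv, (hxs.clm_apply (hasDerivAt_const x _)).deriv]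
  simpa using hsymm.eq (1, 0) (0, 1)

end PartialDerivatives

/-- The derivative `∂ₜ f + u ∂ₓ f` of `f` along the flow of the velocity field `u`. -/
noncomputable def materialDeriv {𝕜 : Type*} [NontriviallyNormedField 𝕜] (u f : 𝕜 → 𝕜 → 𝕜)
    (t x : 𝕜) : 𝕜 :=
  deriv (fun s => f s x) t + u t x * deriv (f t) x

/-- The active potential `V = λ(ρ) ∂ₓ u` of a flow with density `ρ`, velocity `u` and viscosity
`lam`. -/
noncomputable def activePotential {𝕜 : Type*} [NontriviallyNormedField 𝕜] (lam : 𝕜 → 𝕜)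
    (ρ u : 𝕜 → 𝕜 → 𝕜) (t x : 𝕜) : 𝕜 :=
  lam (ρ t x) * deriv (u t) x

section MaterialDerivative

variable {𝕜 : Type*} [NontriviallyNormedField 𝕜] {u f g ρ : 𝕜 → 𝕜 → 𝕜} {t x : 𝕜}

lemma materialDeriv_mul (hf : DifferentiableAt 𝕜 (uncurry f) (t, x))
    (hg : DifferentiableAt 𝕜 (uncurry g) (t, x)) :
    materialDeriv u (fun s y => f s y * g s y) t x =
      materialDeriv u f t x * g t x + f t x * materialDeriv u g t x := by
  simp only [materialDeriv]
  rw [deriv_fun_mul (differentiableAt_fst_of_uncurry hf) (differentiableAt_fst_of_uncurry hg),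
    deriv_fun_mul (differentiableAt_snd_of_uncurry hf) (differentiableAt_snd_of_uncurry hg)]
  ring

lemma materialDeriv_comp {φ : 𝕜 → 𝕜} (hφ : DifferentiableAt 𝕜 φ (f t x))
    (hf : DifferentiableAt 𝕜 (uncurry f) (t, x)) :
    materialDeriv u (fun s y => φ (f s y)) t x = deriv φ (f t x) * materialDeriv u f t x := by
  have ht : deriv (fun s => φ (f s x)) t = deriv φ (f t x) * deriv (fun s => f s x) t :=
    deriv_comp t hφ (differentiableAt_fst_of_uncurry hf)
  have hx : deriv (fun y => φ (f t y)) x = deriv φ (f t x) * deriv (f t) x :=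
    deriv_comp x hφ (differentiableAt_snd_of_uncurry hf)
  simp only [materialDeriv, ht, hx]
  ring

lemma differentiableAt_materialDeriv_snd (hu : DifferentiableAt 𝕜 (u t) x)
    (hf : ContDiff 𝕜 2 (uncurry f)) : DifferentiableAt 𝕜 (materialDeriv u f t) x := by
  have hft := (contDiff_uncurry_deriv_fst hf one_add_one_eq_two.le).differentiable one_ne_zero
  have hfx := (contDiff_uncurry_deriv_snd hf one_add_one_eq_two.le).differentiable one_ne_zero
  exact (differentiableAt_snd_of_uncurry (hft (t, x))).add
    (hu.mul (differentiableAt_snd_of_uncurry (hfx (t, x))))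

lemma deriv_materialDeriv {n : WithTop ℕ∞} (hu : DifferentiableAt 𝕜 (u t) x)
    (hf : ContDiff 𝕜 n (uncurry f)) (hn : minSmoothness 𝕜 2 ≤ n) :
    deriv (materialDeriv u f t) x =
      materialDeriv u (fun s y => deriv (f s) y) t x + deriv (u t) x * deriv (f t) x := by
  have hf2 : ContDiff 𝕜 2 (uncurry f) := hf.of_le (le_minSmoothness.trans hn)
  have hft := (contDiff_uncurry_deriv_fst hf2 one_add_one_eq_two.le).differentiable one_ne_zero
  have hfx := (contDiff_uncurry_deriv_snd hf2 one_add_one_eq_two.le).differentiable one_ne_zero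
  have hftx := (differentiableAt_snd_of_uncurry (hft (t, x))).hasDerivAt
  have hfxx := (differentiableAt_snd_of_uncurry (hfx (t, x))).hasDerivAt
  have hD : deriv (materialDeriv u f t) x = _ := (hftx.add (hu.hasDerivAt.mul hfxx)).deriv
  rw [hD, materialDeriv, deriv_fst_deriv_snd_comm hf hn]
  ring

lemma materialDeriv_density (hρ : DifferentiableAt 𝕜 (ρ t) x) (hu : DifferentiableAt 𝕜 (u t) x)
    (hcont : deriv (fun s => ρ s x) t + deriv (fun y => ρ t y * u t y) x = 0) :
    materialDeriv u ρ t x = -(ρ t x * deriv (u t) x) := by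
  rw [deriv_fun_mul hρ hu] at hcont
  rw [materialDeriv]
  linear_combination hcont

lemma deriv_mul_add_deriv_flux_eq_mul_materialDeriv (hρ : DifferentiableAt 𝕜 (uncurry ρ) (t, x))
    (hu : DifferentiableAt 𝕜 (u t) x) (hf : DifferentiableAt 𝕜 (uncurry f) (t, x))
    (hcont : deriv (fun s => ρ s x) t + deriv (fun y => ρ t y * u t y) x = 0) :
    deriv (fun s => ρ s x * f s x) t + deriv (fun y => ρ t y * u t y * f t y) x =
      ρ t x * materialDeriv u f t x := by
  have hρu : DifferentiableAt 𝕜 (fun y => ρ t y * u t y) x :=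
    (differentiableAt_snd_of_uncurry hρ).mul hu
  rw [deriv_fun_mul (differentiableAt_fst_of_uncurry hρ) (differentiableAt_fst_of_uncurry hf),
    deriv_fun_mul hρu (differentiableAt_snd_of_uncurry hf), materialDeriv]
  linear_combination f t x * hcont

end MaterialDerivative

section ActivePotential

variable {𝕜 : Type*} [NontriviallyNormedField 𝕜] {lam : 𝕜 → 𝕜} {ρ u : 𝕜 → 𝕜 → 𝕜} {t x : 𝕜}

lemma deriv_activePotential (hρ : DifferentiableAt 𝕜 (uncurry ρ) (t, x))
    (hu : DifferentiableAt 𝕜 (uncurry u) (t, x))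
    (hcont : deriv (fun s => ρ s x) t + deriv (fun y => ρ t y * u t y) x = 0)
    (hmom : deriv (fun s => ρ s x * u s x) t + deriv (fun y => ρ t y * u t y ^ 2) x -
      deriv (activePotential lam ρ u t) x = 0) :
    deriv (activePotential lam ρ u t) x = ρ t x * materialDeriv u u t x := by
  have hflux := deriv_mul_add_deriv_flux_eq_mul_materialDeriv hρ
    (differentiableAt_snd_of_uncurry hu) hu hcont
  simp only [mul_assoc, ← sq] at hflux
  exact (sub_eq_zero.mp hmom).symm.trans hflux

lemma materialDeriv_activePotential {n : WithTop ℕ∞} (hn : minSmoothness 𝕜 2 ≤ n)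
    (hlam : DifferentiableAt 𝕜 lam (ρ t x)) (hρ : DifferentiableAt 𝕜 (uncurry ρ) (t, x))
    (hu : ContDiff 𝕜 n (uncurry u))
    (hcont : deriv (fun s => ρ s x) t + deriv (fun y => ρ t y * u t y) x = 0) :
    materialDeriv u (activePotential lam ρ u) t x =
      lam (ρ t x) * deriv (materialDeriv u u t) x -
        (deriv lam (ρ t x) * ρ t x + lam (ρ t x)) * deriv (u t) x ^ 2 := by
  have h2n : 2 ≤ n := le_minSmoothness.trans hn
  have hux : DifferentiableAt 𝕜 (u t) x :=
    differentiableAt_snd_of_uncurry (hu.differentiable (zero_lt_two.trans_le h2n).ne' (t, x))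
  have huxx : DifferentiableAt 𝕜 (uncurry fun s y => deriv (u s) y) (t, x) :=
    (contDiff_uncurry_deriv_snd hu (one_add_one_eq_two.trans_le h2n)).differentiable one_ne_zero _
  have hprod : materialDeriv u (activePotential lam ρ u) t x = _ :=
    materialDeriv_mul (hlam.comp (t, x) hρ) huxx
  rw [hprod, materialDeriv_comp hlam hρ,
    materialDeriv_density (differentiableAt_snd_of_uncurry hρ) hux hcont,
    deriv_materialDeriv hux hu hn]
  ring

end ActivePotential

theorem stmt0_general {𝕜 : Type*} [NontriviallyNormedField 𝕜] {n : WithTop ℕ∞}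
    (hn : minSmoothness 𝕜 2 ≤ n) {lam : 𝕜 → 𝕜} {ρ u : 𝕜 → 𝕜 → 𝕜} {t x : 𝕜}
    (hlam : DifferentiableAt 𝕜 lam (ρ t x)) (hρ : Differentiable 𝕜 (uncurry ρ))
    (hu : ContDiff 𝕜 n (uncurry u)) (hρ_ne : ρ t x ≠ 0) (hlam_ne : lam (ρ t x) ≠ 0)
    (hcont : ∀ t x, deriv (fun s => ρ s x) t + deriv (fun y => ρ t y * u t y) x = 0)
    (hmom : ∀ t x, deriv (fun s => ρ s x * u s x) t + deriv (fun y => ρ t y * u t y ^ 2) x -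
      deriv (activePotential lam ρ u t) x = 0) :
    deriv (fun s => activePotential lam ρ u s x) t +
        (u t x + lam (ρ t x) / ρ t x ^ 2 * deriv (ρ t) x) * deriv (activePotential lam ρ u t) x -
        lam (ρ t x) / ρ t x * deriv (deriv (activePotential lam ρ u t)) x =
      -((deriv lam (ρ t x) * ρ t x + lam (ρ t x)) / lam (ρ t x) ^ 2) *
        activePotential lam ρ u t x ^ 2 := by
  have hu2 : ContDiff 𝕜 2 (uncurry u) := hu.of_le (le_minSmoothness.trans hn)
  have hu_diff : Differentiable 𝕜 (uncurry u) := hu2.differentiable two_ne_zero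
  have hVx : deriv (activePotential lam ρ u t) = fun y => ρ t y * materialDeriv u u t y :=
    funext fun y => deriv_activePotential (hρ _) (hu_diff _) (hcont t y) (hmom t y)
  have hVxx : deriv (deriv (activePotential lam ρ u t)) x =
      deriv (ρ t) x * materialDeriv u u t x + ρ t x * deriv (materialDeriv u u t) x := by
    rw [hVx]
    exact deriv_fun_mul (differentiableAt_snd_of_uncurry (hρ _))
      (differentiableAt_materialDeriv_snd (differentiableAt_snd_of_uncurry (hu_diff _)) hu2)
  have hDV := materialDeriv_activePotential hn hlam (hρ _) hu (hcont t x)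
  rw [materialDeriv, congrFun hVx x] at hDV
  rw [hVxx, congrFun hVx x, activePotential]
  field_simp
  linear_combination ρ t x * hDV

/-- Equation for the active potential `V = λ(ρ) ∂ₓ u` for smooth solutions of the
pressureless compressible Navier–Stokes system with density-dependent viscosity. -/
theorem stmt0
    (lam : ℝ → ℝ) (hlam : ContDiff ℝ 2 lam)
    (ρ u : ℝ → ℝ → ℝ)
    (hρ : ContDiff ℝ (⊤ : ℕ∞) (fun q : ℝ × ℝ => ρ q.1 q.2))
    (hu : ContDiff ℝ (⊤ : ℕ∞) (fun q : ℝ × ℝ => u q.1 q.2))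
    (hρpos : ∀ t x, 0 < ρ t x)
    (hlampos : ∀ t x, 0 < lam (ρ t x))
    (hcont : ∀ t x,
      deriv (fun s => ρ s x) t + deriv (fun y => ρ t y * u t y) x = 0)
    (hmom : ∀ t x,
      deriv (fun s => ρ s x * u s x) t
        + deriv (fun y => ρ t y * (u t y) ^ 2) x
        - deriv (fun y => lam (ρ t y) * deriv (u t) y) x = 0) :
    ∀ t x,
      deriv (fun s => lam (ρ s x) * deriv (u s) x) t
        + (u t x + lam (ρ t x) / (ρ t x) ^ 2 * deriv (ρ t) x)
            * deriv (fun y => lam (ρ t y) * deriv (u t) y) x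
        - lam (ρ t x) / ρ t x
            * deriv (deriv (fun y => lam (ρ t y) * deriv (u t) y)) x
      = -((deriv lam (ρ t x) * ρ t x + lam (ρ t x)) / (lam (ρ t x)) ^ 2)
          * (lam (ρ t x) * deriv (u t) x) ^ 2 := fun t x =>
  stmt0_general (n := 2) (by simp) (hlam.differentiable two_ne_zero _)
    (hρ.differentiable (by simp)) (hu.of_le (WithTop.coe_le_coe.2 le_top))
    (hρpos t x).ne' (hlampos t x).ne' hcont hmom
end

section
/- Let p, φ : (0,1) → ℝ be twice continuously differentiable, let π : (0,1) → ℝ be differentiable with π'(s) = s p'(s) + s φ'(s) for all s ∈ (0,1), and set λ(s) := s² p'(s) + s² φ'(s). Let ρ, u : ℝ × ℝ → ℝ be smooth with 0 < ρ(t,x) < 1 for all (t,x), satisfying pointwise ∂_t ρ + ∂_x(ρ u) = 0 and ∂_t(ρ u) + ∂_x(ρ u²) − ∂_x(λ(ρ) ∂_x u) = 0. Then m := ρ u + ∂_x(π(ρ)) satisfies pointwise the conservative (dual) form ∂_t m + ∂_x(m u) = 0. -/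
/-!
Write `L_u m = ∂ₜ m + ∂ₓ (m u)`. For every `C²` function `w`, equality of mixed partials gives
`L_u (∂ₓ w) = ∂ₓ (∂ₜ w + u ∂ₓ w)`. Take `w = π(ρ)`: the continuity equation `L_u ρ = 0` renormalizes
to `∂ₜ w + u ∂ₓ w = -ρ π'(ρ) ∂ₓ u`, which is `-λ(ρ) ∂ₓ u`. Hence `L_u (∂ₓ π(ρ)) = -∂ₓ (λ(ρ) ∂ₓ u)`
cancels the viscous term of the momentum equation `L_u (ρ u) = ∂ₓ (λ(ρ) ∂ₓ u)`.
-/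

theorem hasFDerivAt_fderiv_apply {𝕜 D E : Type*} [NontriviallyNormedField 𝕜]
    [NormedAddCommGroup D] [NormedSpace 𝕜 D] [NormedAddCommGroup E] [NormedSpace 𝕜 E] {f : D → E}
    {a : D} (hf : ContDiffAt 𝕜 2 f a) (v : D) :
    HasFDerivAt (fun q => fderiv 𝕜 f q v) ((fderiv 𝕜 (fderiv 𝕜 f) a).flip v) a := by
  have hf' : DifferentiableAt 𝕜 (fderiv 𝕜 f) a :=
    (hf.fderiv_right (m := 1) (by norm_num)).differentiableAt one_ne_zero
  simpa using hf'.hasFDerivAt.clm_apply (hasFDerivAt_const v a)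

section PartialDerivatives

variable {𝕜 E : Type*} [NontriviallyNormedField 𝕜] [NormedAddCommGroup E] [NormedSpace 𝕜 E]
  {f : 𝕜 → 𝕜 → E} {t x : 𝕜}

theorem hasDerivAt_slice_fst {f' : 𝕜 × 𝕜 →L[𝕜] E} (hf : HasFDerivAt ↿f f' (t, x)) :
    HasDerivAt (fun s => f s x) (f' (1, 0)) t :=
  hf.comp_hasDerivAt (f := fun s => (s, x)) t ((hasDerivAt_id t).prodMk (hasDerivAt_const t x))

theorem hasDerivAt_slice_snd {f' : 𝕜 × 𝕜 →L[𝕜] E} (hf : HasFDerivAt ↿f f' (t, x)) :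
    HasDerivAt (f t) (f' (0, 1)) x :=
  hf.comp_hasDerivAt (f := fun y => (t, y)) x ((hasDerivAt_const x t).prodMk (hasDerivAt_id x))

theorem differentiableAt_slice_fst (hf : DifferentiableAt 𝕜 ↿f (t, x)) :
    DifferentiableAt 𝕜 (fun s => f s x) t :=
  (hasDerivAt_slice_fst hf.hasFDerivAt).differentiableAt

theorem differentiableAt_slice_snd (hf : DifferentiableAt 𝕜 ↿f (t, x)) :
    DifferentiableAt 𝕜 (f t) x :=
  (hasDerivAt_slice_snd hf.hasFDerivAt).differentiableAt

theorem hasFDerivAt_deriv_fst (hf : ContDiffAt 𝕜 2 ↿f (t, x)) :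
    HasFDerivAt ↿(fun s y => deriv (fun r => f r y) s)
      ((fderiv 𝕜 (fderiv 𝕜 ↿f) (t, x)).flip (1, 0)) (t, x) := by
  refine (hasFDerivAt_fderiv_apply hf (1, 0)).congr_of_eventuallyEq ?_
  filter_upwards [hf.eventually (by simp)] with q hq
  exact (hasDerivAt_slice_fst (hq.differentiableAt two_ne_zero).hasFDerivAt).deriv

theorem hasFDerivAt_deriv_snd (hf : ContDiffAt 𝕜 2 ↿f (t, x)) :
    HasFDerivAt ↿(fun s y => deriv (f s) y)
      ((fderiv 𝕜 (fderiv 𝕜 ↿f) (t, x)).flip (0, 1)) (t, x) := by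
  refine (hasFDerivAt_fderiv_apply hf (0, 1)).congr_of_eventuallyEq ?_
  filter_upwards [hf.eventually (by simp)] with q hq
  exact (hasDerivAt_slice_snd (hq.differentiableAt two_ne_zero).hasFDerivAt).deriv

end PartialDerivatives

theorem deriv_fst_deriv_snd_comm_s2 {𝕜 E : Type*} [RCLike 𝕜] [NormedAddCommGroup E]
    [NormedSpace 𝕜 E] {f : 𝕜 → 𝕜 → E} {t x : 𝕜} (hf : ContDiffAt 𝕜 2 ↿f (t, x)) :
    deriv (fun s => deriv (f s) x) t = deriv (fun y => deriv (fun s => f s y) t) x :=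
  calc deriv (fun s => deriv (f s) x) t
    _ = fderiv 𝕜 (fderiv 𝕜 ↿f) (t, x) (1, 0) (0, 1) :=
      (hasDerivAt_slice_fst (hasFDerivAt_deriv_snd hf)).deriv
    _ = fderiv 𝕜 (fderiv 𝕜 ↿f) (t, x) (0, 1) (1, 0) :=
      (hf.isSymmSndFDerivAt (by simp)).eq _ _
    _ = deriv (fun y => deriv (fun s => f s y) t) x :=
      (hasDerivAt_slice_snd (hasFDerivAt_deriv_fst hf)).deriv.symm

section Primitive

variable {𝕜 : Type*} [NontriviallyNormedField 𝕜] {S : Set 𝕜}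

theorem contDiffOn_succ_of_hasDerivAt {E : Type*} [NormedAddCommGroup E] [NormedSpace 𝕜 E]
    {f f' : 𝕜 → E} {n : ℕ∞} (hS : IsOpen S) (hf : ∀ s ∈ S, HasDerivAt f (f' s) s)
    (hf' : ContDiffOn 𝕜 n f' S) : ContDiffOn 𝕜 (n + 1) f S :=
  (contDiffOn_succ_iff_deriv_of_isOpen hS).2
    ⟨fun s hs => (hf s hs).differentiableAt.differentiableWithinAt, by simp,
      hf'.congr fun s hs => (hf s hs).deriv⟩

theorem contDiffOn_two_of_hasDerivAt_mul_deriv_add {p φ π : 𝕜 → 𝕜} (hS : IsOpen S)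
    (hp : ContDiffOn 𝕜 2 p S) (hφ : ContDiffOn 𝕜 2 φ S)
    (hπ : ∀ s ∈ S, HasDerivAt π (s * deriv p s + s * deriv φ s) s) : ContDiffOn 𝕜 2 π S := by
  have hp' : ContDiffOn 𝕜 1 (deriv p) S := hp.deriv_of_isOpen hS (by norm_num)
  have hφ' : ContDiffOn 𝕜 1 (deriv φ) S := hφ.deriv_of_isOpen hS (by norm_num)
  simpa [one_add_one_eq_two] using contDiffOn_succ_of_hasDerivAt (n := 1) hS hπ
    ((contDiffOn_id.mul hp').add (contDiffOn_id.mul hφ'))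

end Primitive

/-- The conservative transport operator `m ↦ ∂ₜ m + ∂ₓ (m u)` of a velocity field `u`, in terms of
one-variable derivatives: functions of time and space are curried, time first. With it, mass
conservation, the momentum balance and the transport of the modified momentum all concern the same
operator. -/
noncomputable def conservativeTransport {𝕜 : Type*} [NontriviallyNormedField 𝕜]
    (u m : 𝕜 → 𝕜 → 𝕜) (t x : 𝕜) : 𝕜 :=
  deriv (fun s => m s x) t + deriv (fun y => m t y * u t y) x

section Transport

variable {𝕜 : Type*} [NontriviallyNormedField 𝕜] {u : 𝕜 → 𝕜 → 𝕜} {t x : 𝕜}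

theorem conservativeTransport_add {m n : 𝕜 → 𝕜 → 𝕜} (hm : DifferentiableAt 𝕜 ↿m (t, x))
    (hn : DifferentiableAt 𝕜 ↿n (t, x)) (hu : DifferentiableAt 𝕜 (u t) x) :
    conservativeTransport u (fun s y => m s y + n s y) t x =
      conservativeTransport u m t x + conservativeTransport u n t x := by
  simp only [conservativeTransport, add_mul]
  rw [deriv_fun_add (differentiableAt_slice_fst hm) (differentiableAt_slice_fst hn),
    deriv_fun_add ((differentiableAt_slice_snd hm).fun_mul hu)
      ((differentiableAt_slice_snd hn).fun_mul hu)]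
  ring

theorem deriv_comp_add_deriv_comp_mul_of_conservativeTransport_eq_zero {π : 𝕜 → 𝕜}
    {ρ : 𝕜 → 𝕜 → 𝕜} (hπ : DifferentiableAt 𝕜 π (ρ t x)) (hρ : DifferentiableAt 𝕜 ↿ρ (t, x))
    (hu : DifferentiableAt 𝕜 (u t) x) (hcont : conservativeTransport u ρ t x = 0) :
    deriv (fun s => π (ρ s x)) t + deriv (fun y => π (ρ t y)) x * u t x =
      -(ρ t x * deriv π (ρ t x) * deriv (u t) x) := by
  have hπt : deriv (fun s => π (ρ s x)) t = deriv π (ρ t x) * deriv (fun s => ρ s x) t :=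
    deriv_comp t hπ (differentiableAt_slice_fst hρ)
  have hπx : deriv (fun y => π (ρ t y)) x = deriv π (ρ t x) * deriv (ρ t) x :=
    deriv_comp x hπ (differentiableAt_slice_snd hρ)
  rw [conservativeTransport, deriv_fun_mul (differentiableAt_slice_snd hρ) hu] at hcont
  rw [hπt, hπx]
  linear_combination deriv π (ρ t x) * hcont

end Transport

section MixedPartials

variable {𝕜 : Type*} [RCLike 𝕜] {u : 𝕜 → 𝕜 → 𝕜} {t x : 𝕜}

theorem conservativeTransport_deriv {w : 𝕜 → 𝕜 → 𝕜} (hw : ContDiffAt 𝕜 2 ↿w (t, x))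
    (hu : DifferentiableAt 𝕜 (u t) x) :
    conservativeTransport u (fun s y => deriv (w s) y) t x =
      deriv (fun y => deriv (fun s => w s y) t + deriv (w t) y * u t y) x := by
  have hwt : DifferentiableAt 𝕜 (fun y => deriv (fun s => w s y) t) x :=
    differentiableAt_slice_snd (hasFDerivAt_deriv_fst hw).differentiableAt
  have hwx : DifferentiableAt 𝕜 (deriv (w t)) x :=
    differentiableAt_slice_snd (hasFDerivAt_deriv_snd hw).differentiableAt
  rw [conservativeTransport, deriv_fst_deriv_snd_comm_s2 hw, deriv_fun_add hwt (hwx.fun_mul hu)]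

theorem conservativeTransport_deriv_comp_of_eq_zero {π : 𝕜 → 𝕜} {ρ : 𝕜 → 𝕜 → 𝕜}
    (hπ : ∀ y, ContDiffAt 𝕜 2 π (ρ t y)) (hρ : ∀ y, ContDiffAt 𝕜 2 ↿ρ (t, y))
    (hu : Differentiable 𝕜 (u t)) (hcont : ∀ y, conservativeTransport u ρ t y = 0) :
    conservativeTransport u (fun s y => deriv (fun z => π (ρ s z)) y) t x =
      -deriv (fun y => ρ t y * deriv π (ρ t y) * deriv (u t) y) x := by
  have hw : ContDiffAt 𝕜 2 ↿(fun s y => π (ρ s y)) (t, x) := (hπ x).comp (f := ↿ρ) (t, x) (hρ x)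
  have hrenorm (y : 𝕜) : deriv (fun s => π (ρ s y)) t + deriv (fun z => π (ρ t z)) y * u t y =
      -(ρ t y * deriv π (ρ t y) * deriv (u t) y) :=
    deriv_comp_add_deriv_comp_mul_of_conservativeTransport_eq_zero
      ((hπ y).differentiableAt two_ne_zero) ((hρ y).differentiableAt two_ne_zero) (hu y) (hcont y)
  rw [conservativeTransport_deriv hw (hu x)]
  simp only [hrenorm, deriv.fun_neg]

end MixedPartials

theorem stmt2_general {𝕜 : Type*} [RCLike 𝕜] {π lam : 𝕜 → 𝕜} {ρ u : 𝕜 → 𝕜 → 𝕜}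
    (hπ : ∀ t x, ContDiffAt 𝕜 2 π (ρ t x))
    (hlam : ∀ t x, lam (ρ t x) = ρ t x * deriv π (ρ t x))
    (hρ : ContDiff 𝕜 2 ↿ρ) (hu : Differentiable 𝕜 ↿u)
    (hcont : ∀ t x, deriv (fun s => ρ s x) t + deriv (fun y => ρ t y * u t y) x = 0)
    (hmom : ∀ t x, deriv (fun s => ρ s x * u s x) t + deriv (fun y => ρ t y * (u t y) ^ 2) x
      - deriv (fun y => lam (ρ t y) * deriv (u t) y) x = 0) (t x : 𝕜) :
    deriv (fun s => ρ s x * u s x + deriv (fun y => π (ρ s y)) x) t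
      + deriv (fun y => (ρ t y * u t y + deriv (fun z => π (ρ t z)) y) * u t y) x = 0 := by
  have hux (y : 𝕜) : DifferentiableAt 𝕜 (u t) y := differentiableAt_slice_snd (hu (t, y))
  have hρu : DifferentiableAt 𝕜 ↿(fun s y => ρ s y * u s y) (t, x) :=
    (hρ.differentiable two_ne_zero (t, x)).mul (hu (t, x))
  have hw : ContDiffAt 𝕜 2 ↿(fun s y => π (ρ s y)) (t, x) :=
    (hπ t x).comp (f := ↿ρ) (t, x) hρ.contDiffAt
  have hmomentum : conservativeTransport u (fun s y => ρ s y * u s y) t x =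
      deriv (fun y => lam (ρ t y) * deriv (u t) y) x := by
    simpa only [conservativeTransport, mul_assoc, ← sq] using sub_eq_zero.1 (hmom t x)
  have hpotential : conservativeTransport u (fun s y => deriv (fun z => π (ρ s z)) y) t x =
      -deriv (fun y => lam (ρ t y) * deriv (u t) y) x := by
    simpa only [hlam] using conservativeTransport_deriv_comp_of_eq_zero (hπ t)
      (fun _ => hρ.contDiffAt) hux (hcont t)
  have hsum := conservativeTransport_add hρu (hasFDerivAt_deriv_snd hw).differentiableAt (hux x)
  rwa [hmomentum, hpotential, add_neg_cancel] at hsum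

/-- For smooth solutions of the pressureless Navier–Stokes system with viscosity
`λ(ρ) = ρ² p'(ρ) + ρ² φ'(ρ)`, the modified momentum `m = ρ u + ∂ₓ π(ρ)`, where
`π' (s) = s p'(s) + s φ'(s)`, satisfies the conservative form `∂ₜ m + ∂ₓ (m u) = 0`. -/
theorem stmt2
    (p φ : ℝ → ℝ)
    (hp : ContDiffOn ℝ 2 p (Set.Ioo 0 1))
    (hφ : ContDiffOn ℝ 2 φ (Set.Ioo 0 1))
    (π : ℝ → ℝ)
    (hπ : ∀ s ∈ Set.Ioo (0 : ℝ) 1,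
      HasDerivAt π (s * deriv p s + s * deriv φ s) s)
    (ρ u : ℝ → ℝ → ℝ)
    (hρ : ContDiff ℝ (⊤ : ℕ∞) (fun q : ℝ × ℝ => ρ q.1 q.2))
    (hu : ContDiff ℝ (⊤ : ℕ∞) (fun q : ℝ × ℝ => u q.1 q.2))
    (hρrange : ∀ t x, ρ t x ∈ Set.Ioo (0 : ℝ) 1)
    (hcont : ∀ t x,
      deriv (fun s => ρ s x) t + deriv (fun y => ρ t y * u t y) x = 0)
    (hmom : ∀ t x,
      deriv (fun s => ρ s x * u s x) t
        + deriv (fun y => ρ t y * (u t y) ^ 2) x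
        - deriv (fun y =>
            ((ρ t y) ^ 2 * deriv p (ρ t y) + (ρ t y) ^ 2 * deriv φ (ρ t y))
              * deriv (u t) y) x = 0) :
    ∀ t x,
      deriv (fun s => ρ s x * u s x + deriv (fun y => π (ρ s y)) x) t
        + deriv (fun y => (ρ t y * u t y + deriv (fun z => π (ρ t z)) y) * u t y) x
      = 0 := by
  have hπ₂ := contDiffOn_two_of_hasDerivAt_mul_deriv_add isOpen_Ioo hp hφ hπ
  exact stmt2_general (lam := fun s => s ^ 2 * deriv p s + s ^ 2 * deriv φ s)
    (fun t x => hπ₂.contDiffAt (isOpen_Ioo.mem_nhds (hρrange t x)))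
    (fun t x => by rw [(hπ _ (hρrange t x)).deriv]; ring)
    (contDiff_infty.1 hρ 2) (hu.differentiable (by simp)) hcont hmom
end

section
/- For every M₀ > 0 and R > 0 there exists a constant C > 0 such that the following holds: for every 1-periodic continuously differentiable function u : ℝ → ℝ and every measurable 1-periodic function r : ℝ → ℝ with 0 ≤ r(x) ≤ R for almost every x and ∫₀¹ r(x) dx ≥ M₀, one has ∫₀¹ |u(x)| dx ≤ C (∫₀¹ |u'(x)| dx + ∫₀¹ r(x) |u(x)| dx). -/
open MeasureTheory

/-!
By the fundamental theorem of calculus, an absolutely continuous `u` on `[a, b]` oscillates by at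
most `D = ∫ |u'|`, so `|u x| ≤ |u y| + D` for all `x` and `y` in `[a, b]`. Integrating in `x`, and
then in `y` against the weight `r`, gives `(∫ r) ∫ |u| ≤ (b - a) (∫ r |u| + (∫ r) D)`, and dividing
by `∫ r ≥ M₀` yields the inequality with constant `(b - a) max(1, 1 / M₀)`.
-/

section

variable {a b : ℝ} {u r : ℝ → ℝ}

lemma integral_mul_const_le_integral_mul {α : Type*} [MeasurableSpace α] {μ : Measure α}
    {w f : α → ℝ} {c : ℝ} (hw : Integrable w μ) (hwf : Integrable (fun x => w x * f x) μ)
    (hw_nonneg : ∀ᵐ x ∂μ, 0 ≤ w x) (hcf : ∀ᵐ x ∂μ, c ≤ f x) :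
    (∫ x, w x ∂μ) * c ≤ ∫ x, w x * f x ∂μ := by
  rw [← integral_mul_const]
  refine integral_mono_ae (hw.mul_const c) hwf ?_
  filter_upwards [hw_nonneg, hcf] with x hx hcx
  exact mul_le_mul_of_nonneg_left hcx hx

lemma abs_sub_le_abs_integral_abs_deriv (hu : AbsolutelyContinuousOnInterval u a b) {x y : ℝ}
    (hx : x ∈ Set.uIcc a b) (hy : y ∈ Set.uIcc a b) :
    |u x - u y| ≤ |(∫ t in a..b, |deriv u t|)| := by
  have hsub : Set.uIcc y x ⊆ Set.uIcc a b := Set.uIcc_subset_uIcc hy hx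
  calc |u x - u y|
      = |∫ t in y..x, deriv u t| := by rw [(hu.mono hsub).integral_deriv_eq_sub]
    _ ≤ |(∫ t in y..x, |deriv u t|)| :=
      intervalIntegral.norm_integral_le_abs_integral_norm (f := deriv u)
    _ ≤ |(∫ t in a..b, |deriv u t|)| :=
      intervalIntegral.abs_integral_mono_interval (Set.uIoc_subset_uIoc_of_uIcc_subset_uIcc hsub)
        (.of_forall fun _ => abs_nonneg _) hu.intervalIntegrable_deriv.abs

lemma integral_abs_le_mul_abs_add_integral_abs_deriv (hab : a ≤ b)
    (hu : AbsolutelyContinuousOnInterval u a b) {y : ℝ} (hy : y ∈ Set.Icc a b) :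
    ∫ x in a..b, |u x| ≤ (b - a) * (|u y| + ∫ x in a..b, |deriv u x|) := by
  have hD : 0 ≤ ∫ x in a..b, |deriv u x| :=
    intervalIntegral.integral_nonneg hab fun _ _ => abs_nonneg _
  have hosc : ∀ x ∈ Set.Icc a b, |u x| ≤ |u y| + ∫ t in a..b, |deriv u t| := by
    intro x hx
    rw [← Set.uIcc_of_le hab] at hx hy
    have hxy := abs_sub_le_abs_integral_abs_deriv hu hx hy
    rw [abs_of_nonneg hD] at hxy
    linarith [abs_sub_abs_le_abs_sub (u x) (u y)]
  simpa only [intervalIntegral.integral_const, smul_eq_mul] using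
    intervalIntegral.integral_mono_on (μ := volume) hab hu.continuousOn.abs.intervalIntegrable
      intervalIntegrable_const hosc

lemma integral_weight_mul_integral_abs_le (hab : a ≤ b) (hu : AbsolutelyContinuousOnInterval u a b)
    (hr : IntervalIntegrable r volume a b)
    (hr_nonneg : ∀ᵐ x ∂volume.restrict (Set.Ioc a b), 0 ≤ r x) :
    (∫ x in a..b, r x) * ∫ x in a..b, |u x|
      ≤ (b - a) * ((∫ x in a..b, r x * |u x|)
        + (∫ x in a..b, r x) * ∫ x in a..b, |deriv u x|) := by
  set A := ∫ x in a..b, |u x|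
  set D := ∫ x in a..b, |deriv u x|
  have hbound : ∀ᵐ y ∂volume.restrict (Set.Ioc a b), A - (b - a) * D ≤ (b - a) * |u y| := by
    filter_upwards [ae_restrict_mem measurableSet_Ioc] with y hy
    linarith [integral_abs_le_mul_abs_add_integral_abs_deriv hab hu (Set.Ioc_subset_Icc_self hy)]
  have hru : IntervalIntegrable (fun y => r y * ((b - a) * |u y|)) volume a b :=
    hr.mul_continuousOn (continuousOn_const.mul hu.continuousOn.abs)
  have hweighted :=
    calc (∫ y in a..b, r y) * (A - (b - a) * D)
        ≤ ∫ y in a..b, r y * ((b - a) * |u y|) := by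
          rw [intervalIntegral.integral_of_le hab (f := r), intervalIntegral.integral_of_le hab]
          exact integral_mul_const_le_integral_mul hr.1 hru.1 hr_nonneg hbound
      _ = (b - a) * ∫ y in a..b, r y * |u y| := by
          simp only [mul_left_comm _ (b - a), intervalIntegral.integral_const_mul]
  linarith

theorem stmt7_general (hab : a ≤ b) {M₀ : ℝ} (hM₀ : 0 < M₀)
    (hu : AbsolutelyContinuousOnInterval u a b)
    (hr_nonneg : ∀ᵐ x ∂volume.restrict (Set.Ioc a b), 0 ≤ r x)
    (hmass : M₀ ≤ ∫ x in a..b, r x) :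
    ∫ x in a..b, |u x|
      ≤ (b - a) * max 1 M₀⁻¹ * ((∫ x in a..b, |deriv u x|) + ∫ x in a..b, r x * |u x|) := by
  have hmass_pos : 0 < ∫ x in a..b, r x := hM₀.trans_le hmass
  -- A non-integrable weight would have integral `0`.
  have hr : IntervalIntegrable r volume a b :=
    intervalIntegral.intervalIntegrable_of_integral_ne_zero hmass_pos.ne'
  have hweighted := integral_weight_mul_integral_abs_le hab hu hr hr_nonneg
  have hD : 0 ≤ ∫ x in a..b, |deriv u x| :=
    intervalIntegral.integral_nonneg hab fun _ _ => abs_nonneg _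
  have hW : 0 ≤ ∫ x in a..b, r x * |u x| := by
    rw [intervalIntegral.integral_of_le hab]
    exact integral_nonneg_of_ae (hr_nonneg.mono fun x hx => mul_nonneg hx (abs_nonneg _))
  set M := ∫ x in a..b, r x
  set D := ∫ x in a..b, |deriv u x|
  set W := ∫ x in a..b, r x * |u x|
  have hinv : M⁻¹ ≤ max 1 M₀⁻¹ := (inv_anti₀ hM₀ hmass).trans (le_max_right _ _)
  calc ∫ x in a..b, |u x|
      ≤ M⁻¹ * ((b - a) * (W + M * D)) := (le_inv_mul_iff₀ hmass_pos).2 hweighted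
    _ = (b - a) * (1 * D + M⁻¹ * W) := by
        field_simp
        ring
    _ ≤ (b - a) * (max 1 M₀⁻¹ * D + max 1 M₀⁻¹ * W) := by
        refine mul_le_mul_of_nonneg_left ?_ (sub_nonneg.2 hab)
        gcongr
        exact le_max_left _ _
    _ = (b - a) * max 1 M₀⁻¹ * (D + W) := by ring

end

/-- Generalized Poincaré inequality on the one-dimensional torus (identified with
1-periodic functions on `ℝ`): the `L¹` norm of `u` is controlled by the `L¹` norm of
`u'` plus the weighted norm `∫ r |u|`, uniformly over nonnegative weights `r` bounded
by `R` with mass at least `M₀`. -/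
theorem stmt7 (M₀ R : ℝ) (hM₀ : 0 < M₀) (hR : 0 < R) :
    ∃ C > 0, ∀ u r : ℝ → ℝ,
      ContDiff ℝ 1 u → (∀ x, u (x + 1) = u x) →
      Measurable r → (∀ x, r (x + 1) = r x) →
      (∀ᵐ x : ℝ ∂volume, 0 ≤ r x ∧ r x ≤ R) →
      M₀ ≤ (∫ x in (0 : ℝ)..1, r x) →
      (∫ x in (0 : ℝ)..1, |u x|)
        ≤ C * ((∫ x in (0 : ℝ)..1, |deriv u x|) + ∫ x in (0 : ℝ)..1, r x * |u x|) := by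
  refine ⟨max 1 M₀⁻¹, by positivity, fun u r hu _ _ _ hr hmass => ?_⟩
  simpa only [sub_zero, one_mul] using stmt7_general zero_le_one hM₀
    hu.contDiffOn.absolutelyContinuousOnInterval
    (ae_restrict_of_ae (hr.mono fun _ => And.left)) hmass
end

section
/- Fix γ ≥ 0 and β > 1. There exists a constant c > 0, depending only on β and γ, such that for every ε > 0, every K > 0 and every ρ ∈ [0,1): if ε ∫₀^ρ s^γ (1−s)^{−β} ds ≤ K, then 1 − ρ ≥ c (ε/(K+ε))^{1/(β−1)}, i.e. ρ ≤ 1 − c (ε/(K+ε))^{1/(β−1)}. -/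
/-!
Fix `r ∈ (0, 1)`. On `[r, 1)` the weight `s ^ γ` is at least `r ^ |γ|`, while
`(1 - s) ^ (1 - β) / (β - 1)` is a primitive of `(1 - s) ^ (-β)`. Hence
`I = ∫₀^ρ s ^ γ (1 - s) ^ (-β) ds` controls `(1 - ρ) ^ (1 - β)` by an affine function of `I`, and
applying the decreasing map `x ↦ x ^ (1 / (1 - β))` turns this into a lower bound on `1 - ρ`, to be
combined with `I ≤ K / ε`.
-/

open Set intervalIntegral
open MeasureTheory (volume)

lemma integral_one_sub_rpow {p a b : ℝ} (hp : p ≠ -1) (ha : a < 1) (hb : b < 1) :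
    ∫ s in a..b, (1 - s) ^ p = ((1 - a) ^ (p + 1) - (1 - b) ^ (p + 1)) / (p + 1) := by
  have h_zero : (0 : ℝ) ∉ uIcc (1 - b) (1 - a) :=
    notMem_uIcc_of_lt (sub_pos.2 hb) (sub_pos.2 ha)
  rw [integral_comp_sub_left (fun x : ℝ ↦ x ^ p) 1, integral_rpow (Or.inr ⟨hp, h_zero⟩)]

lemma continuousOn_one_sub_rpow {a b : ℝ} (ha : a < 1) (hb : b < 1) (p : ℝ) :
    ContinuousOn (fun s : ℝ ↦ (1 - s) ^ p) (uIcc a b) :=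
  ContinuousOn.rpow_const (by fun_prop) fun _ hs ↦
    Or.inl (sub_pos.2 (ordConnected_Iio.uIcc_subset ha hb hs)).ne'

lemma intervalIntegrable_rpow_mul_one_sub_rpow {γ a b : ℝ} (hγ : -1 < γ) (ha : a < 1) (hb : b < 1)
    (p : ℝ) : IntervalIntegrable (fun s : ℝ ↦ s ^ γ * (1 - s) ^ p) volume a b :=
  (intervalIntegrable_rpow' hγ).mul_continuousOn (continuousOn_one_sub_rpow ha hb p)

lemma rpow_mul_one_sub_rpow_nonneg {s : ℝ} (hs : s ∈ Icc (0 : ℝ) 1) (γ p : ℝ) :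
    0 ≤ s ^ γ * (1 - s) ^ p :=
  mul_nonneg (Real.rpow_nonneg hs.1 γ) (Real.rpow_nonneg (sub_nonneg.2 hs.2) p)

lemma integral_rpow_mul_one_sub_rpow_nonneg {a b : ℝ} (ha : 0 ≤ a) (hab : a ≤ b) (hb : b ≤ 1)
    (γ p : ℝ) : 0 ≤ ∫ s in a..b, s ^ γ * (1 - s) ^ p :=
  integral_nonneg hab fun _ hs ↦
    rpow_mul_one_sub_rpow_nonneg ⟨ha.trans hs.1, hs.2.trans hb⟩ γ p

lemma rpow_abs_le_rpow {r s : ℝ} (hr : 0 < r) (hrs : r ≤ s) (hs : s ≤ 1) (γ : ℝ) :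
    r ^ |γ| ≤ s ^ γ :=
  calc r ^ |γ| ≤ s ^ |γ| := Real.rpow_le_rpow hr.le hrs (abs_nonneg γ)
    _ ≤ s ^ γ := Real.rpow_le_rpow_of_exponent_ge (hr.trans_le hrs) hs (le_abs_self γ)

lemma rpow_abs_mul_integral_one_sub_rpow_le {γ r ρ : ℝ} (hγ : -1 < γ) (hr : r ∈ Ioo (0 : ℝ) 1)
    (hρ : ρ ∈ Ico (0 : ℝ) 1) (p : ℝ) :
    r ^ |γ| * ∫ s in r..ρ, (1 - s) ^ p ≤ ∫ s in (0 : ℝ)..ρ, s ^ γ * (1 - s) ^ p := by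
  rcases le_total ρ r with h_le | h_le
  · have h_nonpos : ∫ s in r..ρ, (1 - s) ^ p ≤ 0 := by
      rw [integral_symm, neg_nonpos]
      exact integral_nonneg h_le fun s hs ↦ Real.rpow_nonneg (by linarith [hs.2, hr.2]) p
    exact (mul_nonpos_of_nonneg_of_nonpos (Real.rpow_nonneg hr.1.le _) h_nonpos).trans
      (integral_rpow_mul_one_sub_rpow_nonneg le_rfl hρ.1 hρ.2.le γ p)
  · have h_head : 0 ≤ ∫ s in (0 : ℝ)..r, s ^ γ * (1 - s) ^ p :=
      integral_rpow_mul_one_sub_rpow_nonneg le_rfl hr.1.le hr.2.le γ p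
    have h_int : IntervalIntegrable (fun s : ℝ ↦ s ^ γ * (1 - s) ^ p) volume r ρ :=
      intervalIntegrable_rpow_mul_one_sub_rpow hγ hr.2 hρ.2 p
    calc r ^ |γ| * ∫ s in r..ρ, (1 - s) ^ p
        = ∫ s in r..ρ, r ^ |γ| * (1 - s) ^ p := (integral_const_mul _ _).symm
      _ ≤ ∫ s in r..ρ, s ^ γ * (1 - s) ^ p := by
          refine integral_mono_on h_le ?_ h_int fun s hs ↦ ?_
          · exact (continuousOn_one_sub_rpow hr.2 hρ.2 p).intervalIntegrable.const_mul _
          · have hs1 : s ≤ 1 := hs.2.trans hρ.2.le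
            exact mul_le_mul_of_nonneg_right (rpow_abs_le_rpow hr.1 hs.1 hs1 γ)
              (Real.rpow_nonneg (sub_nonneg.2 hs1) p)
      _ ≤ ∫ s in (0 : ℝ)..ρ, s ^ γ * (1 - s) ^ p := by
          rw [← integral_add_adjacent_intervals
            (intervalIntegrable_rpow_mul_one_sub_rpow hγ one_pos hr.2 p) h_int]
          exact le_add_of_nonneg_left h_head

section Singular

variable {γ β r ρ : ℝ}

lemma one_sub_rpow_le_add_mul_integral (hγ : -1 < γ) (hβ : 1 < β) (hr : r ∈ Ioo (0 : ℝ) 1)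
    (hρ : ρ ∈ Ico (0 : ℝ) 1) :
    (1 - ρ) ^ (1 - β) ≤ (1 - r) ^ (1 - β) +
      (β - 1) / r ^ |γ| * ∫ s in (0 : ℝ)..ρ, s ^ γ * (1 - s) ^ (-β) := by
  have hβ' : 0 < β - 1 := sub_pos.2 hβ
  have h_weight : 0 < r ^ |γ| := Real.rpow_pos_of_pos hr.1 _
  have h_primitive : (β - 1) * ∫ s in r..ρ, (1 - s) ^ (-β) =
      (1 - ρ) ^ (1 - β) - (1 - r) ^ (1 - β) := by
    rw [integral_one_sub_rpow (by linarith) hr.2 hρ.2, neg_add_eq_sub, ← neg_sub β 1]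
    field_simp
    ring
  have h_compare : ∫ s in r..ρ, (1 - s) ^ (-β) ≤
      (∫ s in (0 : ℝ)..ρ, s ^ γ * (1 - s) ^ (-β)) / r ^ |γ| :=
    (le_div_iff₀' h_weight).2 (rpow_abs_mul_integral_one_sub_rpow_le hγ hr hρ (-β))
  rw [← sub_le_iff_le_add', ← h_primitive, div_mul_eq_mul_div, mul_div_assoc]
  exact mul_le_mul_of_nonneg_left h_compare hβ'.le

lemma rpow_inv_le_one_sub_of_integral_le {k : ℝ} (hγ : -1 < γ) (hβ : 1 < β) (hr : r ∈ Ioo (0 : ℝ) 1)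
    (hρ : ρ ∈ Ico (0 : ℝ) 1) (hk : ∫ s in (0 : ℝ)..ρ, s ^ γ * (1 - s) ^ (-β) ≤ k) :
    (((1 - r) ^ (1 - β) + (β - 1) / r ^ |γ|) * (k + 1)) ^ (1 - β)⁻¹ ≤ 1 - ρ := by
  have hA : 0 < (1 - r) ^ (1 - β) := Real.rpow_pos_of_pos (sub_pos.2 hr.2) _
  have hB : 0 < (β - 1) / r ^ |γ| := div_pos (sub_pos.2 hβ) (Real.rpow_pos_of_pos hr.1 _)
  have hk0 : 0 ≤ k :=
    (integral_rpow_mul_one_sub_rpow_nonneg le_rfl hρ.1 hρ.2.le γ (-β)).trans hk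
  rw [Real.rpow_inv_le_iff_of_neg (by positivity) (sub_pos.2 hρ.2) (sub_neg.2 hβ)]
  calc (1 - ρ) ^ (1 - β)
      ≤ (1 - r) ^ (1 - β) +
          (β - 1) / r ^ |γ| * ∫ s in (0 : ℝ)..ρ, s ^ γ * (1 - s) ^ (-β) :=
        one_sub_rpow_le_add_mul_integral hγ hβ hr hρ
    _ ≤ (1 - r) ^ (1 - β) + (β - 1) / r ^ |γ| * k := by gcongr
    _ ≤ ((1 - r) ^ (1 - β) + (β - 1) / r ^ |γ|) * (k + 1) := by
        linarith [mul_nonneg hA.le hk0]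

end Singular

theorem stmt11_general (γ β : ℝ) (hγ : -1 < γ) (hβ : 1 < β) :
    ∃ c > 0, ∀ ε K ρ : ℝ, 0 < ε → ρ ∈ Set.Ico (0 : ℝ) 1 →
      ε * (∫ s in (0 : ℝ)..ρ, s ^ γ * (1 - s) ^ (-β)) ≤ K →
      1 - ρ ≥ c * (ε / (K + ε)) ^ (1 / (β - 1)) := by
  have hr : (1 / 2 : ℝ) ∈ Ioo (0 : ℝ) 1 := by norm_num
  set C : ℝ := (1 - 1 / 2) ^ (1 - β) + (β - 1) / (1 / 2) ^ |γ|
  have hC0 : 0 < C :=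
    add_pos (Real.rpow_pos_of_pos (sub_pos.2 hr.2) _) (div_pos (sub_pos.2 hβ) (by positivity))
  refine ⟨C ^ (1 - β)⁻¹, Real.rpow_pos_of_pos hC0 _, fun ε K ρ hε hρ hK ↦ ?_⟩
  have hK0 : 0 ≤ K := (mul_nonneg hε.le
    (integral_rpow_mul_one_sub_rpow_nonneg le_rfl hρ.1 hρ.2.le γ (-β))).trans hK
  have h_scale : (ε / (K + ε)) ^ (1 / (β - 1)) = (K / ε + 1) ^ (1 - β)⁻¹ := by
    rw [div_add_one hε.ne', ← inv_div, Real.inv_rpow (by positivity),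
      ← Real.rpow_neg (by positivity), one_div, ← inv_neg, neg_sub]
  rw [h_scale, ← Real.mul_rpow hC0.le (by positivity)]
  exact rpow_inv_le_one_sub_of_integral_le hγ hβ hr hρ ((le_div_iff₀' hε).2 hK)

/-- A uniform bound on the singular potential `H(ρ) = ε ∫₀^ρ s^γ (1-s)^(-β) ds`
forces the density to stay below `1` by a margin of order `(ε/(K+ε))^(1/(β-1))`. -/
theorem stmt11 (γ β : ℝ) (hγ : 0 ≤ γ) (hβ : 1 < β) :
    ∃ c > 0, ∀ ε K ρ : ℝ, 0 < ε → 0 < K → ρ ∈ Set.Ico (0 : ℝ) 1 →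
      ε * (∫ s in (0 : ℝ)..ρ, s ^ γ * (1 - s) ^ (-β)) ≤ K →
      1 - ρ ≥ c * (ε / (K + ε)) ^ (1 / (β - 1)) := by
  obtain ⟨c, hc, h⟩ := stmt11_general γ β (by linarith) hβ
  exact ⟨c, hc, fun ε K ρ hε _ ↦ h ε K ρ hε⟩
end

section
/- Let α ∈ (0, 1/2), L > 0, m > 0 and B ≥ 0. Let ρ : ℝ → ℝ be continuously differentiable, L-periodic, with ρ(x) > 0 for all x. Suppose there exists x̄ ∈ [0, L] with ρ(x̄) ≥ m, and that the function g := ρ^{α − 1/2} satisfies ∫₀ᴸ g'(x)² dx ≤ B². Then for every x ∈ ℝ one has ρ(x)^{α − 1/2} ≤ m^{α − 1/2} + √L · B, and consequently ρ(x) ≥ (m^{α − 1/2} + √L · B)^{−2/(1 − 2α)}. -/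
/-!
Put `g = ρ ^ (α - 1/2)`. By periodicity, any two points may be moved into one period, where the
fundamental theorem of calculus bounds `|g x - g x̄|` by `∫₀ᴸ |g'|`, and by the Cauchy–Schwarz
inequality `∫₀ᴸ |g'| ≤ √L (∫₀ᴸ g'²)^(1/2) ≤ √L B`. Since `α - 1/2 < 0`, the bound `m ≤ ρ x̄` says
that `g x̄ ≤ m ^ (α - 1/2)`, and an upper bound on `g` is a lower bound on `ρ`.
-/

open MeasureTheory Set

theorem integral_norm_le_sqrt_measureReal_univ_mul_integral_sq_norm {X E : Type*}
    [MeasurableSpace X] {μ : Measure X} [IsFiniteMeasure μ] [NormedAddCommGroup E] {f : X → E}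
    (hf : MemLp f 2 μ) :
    ∫ x, ‖f x‖ ∂μ ≤ √(μ.real univ * ∫ x, ‖f x‖ ^ 2 ∂μ) := by
  have holder := integral_mul_norm_le_Lp_mul_Lq (μ := μ) (f := fun _ => (1 : ℝ))
    Real.HolderConjugate.two_two (memLp_const 1)
    (by simpa only [ENNReal.ofReal_ofNat] using hf.norm)
  rw [Real.sqrt_mul measureReal_nonneg, Real.sqrt_eq_rpow, Real.sqrt_eq_rpow]
  simpa using holder

theorem intervalIntegral_abs_le_sqrt_mul_integral_sq {f : ℝ → ℝ} {a b : ℝ} (hab : a ≤ b)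
    (hf : AEStronglyMeasurable f (volume.restrict (Ioc a b)))
    (hf_sq : IntervalIntegrable (fun t => f t ^ 2) volume a b) :
    ∫ t in a..b, |f t| ≤ √((b - a) * ∫ t in a..b, f t ^ 2) := by
  have hL2 : MemLp f 2 (volume.restrict (Ioc a b)) :=
    (memLp_two_iff_integrable_sq hf).2 hf_sq.1
  simpa [intervalIntegral.integral_of_le hab, hab] using
    integral_norm_le_sqrt_measureReal_univ_mul_integral_sq_norm hL2

section Oscillation

variable {f : ℝ → ℝ} {a b x y : ℝ}

theorem abs_sub_le_integral_abs_deriv (hf : AbsolutelyContinuousOnInterval f a b)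
    (hx : x ∈ Icc a b) (hy : y ∈ Icc a b) :
    |f x - f y| ≤ ∫ t in a..b, |deriv f t| := by
  have hab : a ≤ b := hx.1.trans hx.2
  have hyx_uIcc : uIcc y x ⊆ uIcc a b :=
    uIcc_subset_uIcc (Icc_subset_uIcc hy) (Icc_subset_uIcc hx)
  have hyx_Ioc : uIoc y x ⊆ Ioc a b := Ioc_subset_Ioc (le_min hy.1 hx.1) (max_le hy.2 hx.2)
  calc |f x - f y| = |∫ t in y..x, deriv f t| := by rw [(hf.mono hyx_uIcc).integral_deriv_eq_sub]
    _ ≤ ∫ t in uIoc y x, |deriv f t| := by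
      simpa only [Real.norm_eq_abs] using
        intervalIntegral.norm_integral_le_integral_norm_uIoc (f := deriv f) (μ := volume)
    _ ≤ ∫ t in Ioc a b, |deriv f t| :=
      setIntegral_mono_set hf.intervalIntegrable_deriv.abs.1
        (.of_forall fun _ => abs_nonneg _) hyx_Ioc.eventuallyLE
    _ = ∫ t in a..b, |deriv f t| := (intervalIntegral.integral_of_le hab).symm

theorem abs_sub_le_sqrt_mul_integral_sq_deriv (hf : AbsolutelyContinuousOnInterval f a b)
    (hf_sq : IntervalIntegrable (fun t => deriv f t ^ 2) volume a b)
    (hx : x ∈ Icc a b) (hy : y ∈ Icc a b) :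
    |f x - f y| ≤ √((b - a) * ∫ t in a..b, deriv f t ^ 2) :=
  (abs_sub_le_integral_abs_deriv hf hx hy).trans <|
    intervalIntegral_abs_le_sqrt_mul_integral_sq (hx.1.trans hx.2)
      (aestronglyMeasurable_deriv f _) hf_sq

theorem abs_sub_le_sqrt_mul_integral_sq_deriv_of_periodic {c : ℝ}
    (hper : Function.Periodic f c) (hc : 0 < c)
    (hf : AbsolutelyContinuousOnInterval f a (a + c))
    (hf_sq : IntervalIntegrable (fun t => deriv f t ^ 2) volume a (a + c)) (x y : ℝ) :
    |f x - f y| ≤ √(c * ∫ t in a..a + c, deriv f t ^ 2) := by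
  obtain ⟨x', hx', hfx⟩ := hper.exists_mem_Ico hc x a
  obtain ⟨y', hy', hfy⟩ := hper.exists_mem_Ico hc y a
  simpa only [hfx, hfy, add_sub_cancel_left] using abs_sub_le_sqrt_mul_integral_sq_deriv hf hf_sq
    (Ico_subset_Icc_self hx') (Ico_subset_Icc_self hy')

end Oscillation

theorem stmt13_general {s L m B : ℝ} (hs : s < 0) (hL : 0 < L) (hm : 0 < m) (hB : 0 ≤ B)
    {ρ : ℝ → ℝ} (hper : Function.Periodic ρ L) (hpos : ∀ x, 0 < ρ x)
    (hac : AbsolutelyContinuousOnInterval (fun y => ρ y ^ s) 0 L)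
    (hsq : IntervalIntegrable (fun x => deriv (fun y => ρ y ^ s) x ^ 2) volume 0 L)
    {xbar : ℝ} (hρxbar : m ≤ ρ xbar)
    (hg : ∫ x in (0 : ℝ)..L, deriv (fun y => ρ y ^ s) x ^ 2 ≤ B ^ 2) (x : ℝ) :
    ρ x ^ s ≤ m ^ s + √L * B ∧ (m ^ s + √L * B) ^ s⁻¹ ≤ ρ x := by
  have hper_g : Function.Periodic (fun y => ρ y ^ s) L := hper.comp (· ^ s)
  have hosc : |ρ x ^ s - ρ xbar ^ s| ≤ √L * B :=
    calc |ρ x ^ s - ρ xbar ^ s| ≤ √(L * ∫ t in (0 : ℝ)..L, deriv (fun y => ρ y ^ s) t ^ 2) := by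
          simpa only [zero_add] using abs_sub_le_sqrt_mul_integral_sq_deriv_of_periodic (a := 0)
            hper_g hL (by rwa [zero_add]) (by rwa [zero_add]) x xbar
      _ ≤ √(L * B ^ 2) := by gcongr
      _ = √L * B := by rw [Real.sqrt_mul hL.le, Real.sqrt_sq hB]
  have hbar : ρ xbar ^ s ≤ m ^ s := Real.rpow_le_rpow_of_nonpos hm hρxbar hs.le
  have hupper : ρ x ^ s ≤ m ^ s + √L * B := by linarith [le_of_abs_le hosc]
  exact ⟨hupper, (Real.rpow_inv_le_iff_of_neg (by positivity) (hpos x) hs).2 hupper⟩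

/-- Pointwise lower bound on the density from an `L²` control on the derivative of the
negative power `ρ^(α-1/2)` (`α < 1/2`) on a periodic domain, given one point where
`ρ ≥ m`. -/
theorem stmt13 (α L m B : ℝ)
    (hα : α ∈ Set.Ioo (0 : ℝ) (1 / 2)) (hL : 0 < L) (hm : 0 < m) (hB : 0 ≤ B)
    (ρ : ℝ → ℝ) (hρ : ContDiff ℝ 1 ρ)
    (hper : ∀ x, ρ (x + L) = ρ x)
    (hpos : ∀ x, 0 < ρ x)
    (xbar : ℝ) (hxbar : xbar ∈ Set.Icc (0 : ℝ) L) (hρxbar : m ≤ ρ xbar)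
    (hg : (∫ x in (0 : ℝ)..L, (deriv (fun y => ρ y ^ (α - 1 / 2)) x) ^ 2) ≤ B ^ 2) :
    ∀ x : ℝ,
      ρ x ^ (α - 1 / 2) ≤ m ^ (α - 1 / 2) + Real.sqrt L * B
      ∧ ρ x ≥ (m ^ (α - 1 / 2) + Real.sqrt L * B) ^ (-(2 / (1 - 2 * α))) := by
  have hexp : -(2 / (1 - 2 * α)) = (α - 1 / 2)⁻¹ := by grind
  have hgC : ContDiff ℝ 1 fun y => ρ y ^ (α - 1 / 2) :=
    hρ.rpow_const_of_ne fun y => (hpos y).ne'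
  rw [hexp]
  exact stmt13_general (sub_neg.2 hα.2) hL hm hB hper hpos
    hgC.contDiffOn.absolutelyContinuousOnInterval
    (((hgC.continuous_deriv le_rfl).pow 2).intervalIntegrable _ _) hρxbar hg
end

section
/- Let L > 0, let λ : ℝ → ℝ be continuously differentiable with λ(s) ≥ 0 for all s > 0, and let ρ, u : ℝ × ℝ → ℝ be smooth, L-periodic in the space variable, with ρ(t,x) > 0, solving pointwise ∂_t ρ + ∂_x(ρ u) = 0 and ∂_t(ρ u) + ∂_x(ρ u²) − ∂_x(λ(ρ) ∂_x u) = 0. Then for every convex, twice continuously differentiable S : ℝ → ℝ, the function t ↦ ∫₀ᴸ ρ(t,x) S(u(t,x)) dx is nonincreasing. -/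
/-!
For a flow with arbitrary stress `σ`, the combination of `S(u) - u S'(u)` times the continuity
equation and `S'(u)` times the momentum equation is the pointwise entropy balance
`∂ₜ(ρ S(u)) + ∂ₓ(ρ u S(u) - S'(u) σ) = -S''(u) σ ∂ₓu`.
Integrated over a period the flux disappears, and convexity makes the right-hand side nonpositive as
soon as the stress is dissipative, `σ ∂ₓu ≥ 0`. The viscous stress `σ = λ(ρ) ∂ₓu` is dissipative
because `λ(ρ) ≥ 0`.
-/

open Function MeasureTheory Metric Set

section Deriv

variable {𝕜 E F : Type*} [NontriviallyNormedField 𝕜] [NormedAddCommGroup E]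
  [NormedSpace 𝕜 E] [NormedAddCommGroup F] [NormedSpace 𝕜 F]

theorem hasDerivAt_fst_of_differentiableAt_uncurry {f : 𝕜 → E → F} {t : 𝕜} {x : E}
    (hf : DifferentiableAt 𝕜 (uncurry f) (t, x)) :
    HasDerivAt (fun s => f s x) (fderiv 𝕜 (uncurry f) (t, x) (1, 0)) t :=
  hf.hasFDerivAt.comp_hasDerivAt (f := fun s => (s, x)) t
    ((hasDerivAt_id t).prodMk (hasDerivAt_const t x))

theorem continuous_deriv_fst_of_contDiff_uncurry {f : 𝕜 → E → F}
    (hf : ContDiff 𝕜 1 (uncurry f)) :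
    Continuous (uncurry fun t x => deriv (fun s => f s x) t) := by
  have hderiv : (uncurry fun t x => deriv (fun s => f s x) t) =
      fun q => fderiv 𝕜 (uncurry f) q (1, 0) :=
    funext fun q => (hasDerivAt_fst_of_differentiableAt_uncurry
      (hf.differentiable one_ne_zero q)).deriv
  rw [hderiv]
  exact (hf.continuous_fderiv one_ne_zero).clm_apply continuous_const

theorem periodic_deriv {f : 𝕜 → F} {c : 𝕜} (hf : Periodic f c) : Periodic (deriv f) c := fun x => by
  rw [← deriv_comp_add_const, funext hf]

end Deriv

theorem hasDerivAt_intervalIntegral_of_continuous_deriv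
    {𝕜 F : Type*} [RCLike 𝕜] [NormedAddCommGroup F] [NormedSpace ℝ F] [NormedSpace 𝕜 F]
    {μ : Measure ℝ} [IsLocallyFiniteMeasure μ] {f : 𝕜 → ℝ → F}
    (hf : ∀ t, Continuous (f t)) (hdiff : ∀ x, Differentiable 𝕜 fun s => f s x)
    (hderiv : Continuous (uncurry fun t x => deriv (fun s => f s x) t)) (a b : ℝ) (t : 𝕜) :
    HasDerivAt (fun s => ∫ x in a..b, f s x ∂μ) (∫ x in a..b, deriv (fun s => f s x) t ∂μ) t := by
  obtain ⟨C, hC⟩ := ((isCompact_closedBall t 1).prod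
    (isCompact_uIcc (a := a) (b := b))).exists_bound_of_continuousOn hderiv.continuousOn
  exact (intervalIntegral.hasDerivAt_integral_of_dominated_loc_of_deriv_le
    (bound := fun _ => C) (closedBall_mem_nhds t one_pos)
    (.of_forall fun s => (hf s).aestronglyMeasurable)
    ((hf t).intervalIntegrable a b)
    (hderiv.comp (Continuous.prodMk_right t)).aestronglyMeasurable
    (.of_forall fun x hx s hs => hC (s, x) ⟨hs, uIoc_subset_uIcc hx⟩)
    intervalIntegrable_const
    (.of_forall fun x _ s _ => (hdiff x s).hasDerivAt)).2

theorem deriv_deriv_nonneg_of_convexOn {S : ℝ → ℝ} (hS : Differentiable ℝ S)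
    (hconv : ConvexOn ℝ univ S) (v : ℝ) : 0 ≤ deriv (deriv S) v :=
  (monotoneOn_univ.1 (hconv.monotoneOn_deriv fun x _ => hS x)).deriv_nonneg

/-- `ρ`, `u`, `σ`, as functions of time and space, are the density, velocity and stress of a
classical pressureless flow. The stress is an independent field, so that every constitutive law is
covered; the pressureless Navier–Stokes system is the case of `viscousStress`. -/
structure IsPressurelessFlow (ρ u σ : ℝ → ℝ → ℝ) : Prop where
  contDiff_density : ContDiff ℝ 1 (uncurry ρ)
  contDiff_velocity : ContDiff ℝ 1 (uncurry u)
  contDiff_stress : ∀ t, ContDiff ℝ 1 (σ t)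
  continuity : ∀ t x, deriv (fun s => ρ s x) t + deriv (fun y => ρ t y * u t y) x = 0
  momentum : ∀ t x,
    deriv (fun s => ρ s x * u s x) t + deriv (fun y => ρ t y * u t y ^ 2) x - deriv (σ t) x = 0

/-- The total flux of the entropy density `ρ S(u)`: convection minus the work of the stress. -/
noncomputable def entropyFlux (S : ℝ → ℝ) (ρ u σ : ℝ → ℝ → ℝ) (t x : ℝ) : ℝ :=
  ρ t x * u t x * S (u t x) - deriv S (u t x) * σ t x

/-- The rate `S''(u) σ ∂ₓu` at which a stress `σ` dissipates the entropy density `ρ S(u)`. -/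
noncomputable def entropyDissipation (S : ℝ → ℝ) (u σ : ℝ → ℝ → ℝ) (t x : ℝ) : ℝ :=
  deriv (deriv S) (u t x) * (σ t x * deriv (u t) x)

/-- The stress `λ(ρ) ∂ₓu` of a fluid with density-dependent viscosity `λ`, for which the
pressureless momentum equation becomes the Navier–Stokes one. -/
noncomputable def viscousStress (lam : ℝ → ℝ) (ρ u : ℝ → ℝ → ℝ) (t x : ℝ) : ℝ :=
  lam (ρ t x) * deriv (u t) x

section Stress

variable {L t x : ℝ} {lam S : ℝ → ℝ} {ρ u σ : ℝ → ℝ → ℝ}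

theorem periodic_entropyFlux (hρ : Periodic (ρ t) L) (hu : Periodic (u t) L)
    (hσ : Periodic (σ t) L) : Periodic (entropyFlux S ρ u σ t) L := fun x => by
  simp only [entropyFlux, hρ x, hu x, hσ x]

theorem entropyDissipation_nonneg (hS : Differentiable ℝ S) (hconv : ConvexOn ℝ univ S)
    (hσ : 0 ≤ σ t x * deriv (u t) x) : 0 ≤ entropyDissipation S u σ t x :=
  mul_nonneg (deriv_deriv_nonneg_of_convexOn hS hconv _) hσ

theorem contDiff_viscousStress (hlam : ContDiff ℝ 1 lam) (hρ : ContDiff ℝ 1 (ρ t))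
    (hu : ContDiff ℝ 2 (u t)) : ContDiff ℝ 1 (viscousStress lam ρ u t) :=
  (hlam.comp hρ).mul (ContDiff.deriv' (n := 1) hu)

theorem periodic_viscousStress (hρ : Periodic (ρ t) L) (hu : Periodic (u t) L) :
    Periodic (viscousStress lam ρ u t) L := fun x => by
  simp only [viscousStress, hρ x, periodic_deriv hu x]

theorem viscousStress_mul_deriv_nonneg (hlam : 0 ≤ lam (ρ t x)) :
    0 ≤ viscousStress lam ρ u t x * deriv (u t) x := by
  rw [viscousStress, mul_assoc]
  exact mul_nonneg hlam (mul_self_nonneg _)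

end Stress

namespace IsPressurelessFlow

variable {S : ℝ → ℝ} {ρ u σ : ℝ → ℝ → ℝ}

theorem contDiff_density_slice (h : IsPressurelessFlow ρ u σ) (t : ℝ) : ContDiff ℝ 1 (ρ t) :=
  h.contDiff_density.comp (contDiff_prodMk_right t)

theorem contDiff_velocity_slice (h : IsPressurelessFlow ρ u σ) (t : ℝ) : ContDiff ℝ 1 (u t) :=
  h.contDiff_velocity.comp (contDiff_prodMk_right t)

theorem contDiff_entropy (h : IsPressurelessFlow ρ u σ) (hS : ContDiff ℝ 1 S) :
    ContDiff ℝ 1 (uncurry fun t x => ρ t x * S (u t x)) :=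
  h.contDiff_density.mul (hS.comp h.contDiff_velocity)

theorem contDiff_entropyFlux (h : IsPressurelessFlow ρ u σ) (hS : ContDiff ℝ 2 S) (t : ℝ) :
    ContDiff ℝ 1 (entropyFlux S ρ u σ t) := by
  have hu := h.contDiff_velocity_slice t
  have hS' : ContDiff ℝ 1 (deriv S) := ContDiff.deriv' (n := 1) hS
  exact (((h.contDiff_density_slice t).mul hu).mul ((hS.of_le one_le_two).comp hu)).sub
    ((hS'.comp hu).mul (h.contDiff_stress t))

theorem continuous_entropyDissipation (h : IsPressurelessFlow ρ u σ) (hS : ContDiff ℝ 2 S)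
    (t : ℝ) : Continuous (entropyDissipation S u σ t) := by
  have hu := h.contDiff_velocity_slice t
  have hS' : ContDiff ℝ 1 (deriv S) := ContDiff.deriv' (n := 1) hS
  exact ((hS'.continuous_deriv le_rfl).comp hu.continuous).mul
    ((h.contDiff_stress t).continuous.mul (hu.continuous_deriv le_rfl))

theorem entropy_balance (h : IsPressurelessFlow ρ u σ) (hS : ContDiff ℝ 2 S) (t x : ℝ) :
    deriv (fun s => ρ s x * S (u s x)) t + deriv (entropyFlux S ρ u σ t) x =
      -entropyDissipation S u σ t x := by
  have hρt := hasDerivAt_fst_of_differentiableAt_uncurry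
    (h.contDiff_density.differentiable one_ne_zero (t, x))
  have hut := hasDerivAt_fst_of_differentiableAt_uncurry
    (h.contDiff_velocity.differentiable one_ne_zero (t, x))
  have hρx := ((h.contDiff_density_slice t).differentiable one_ne_zero x).hasDerivAt
  have hux := ((h.contDiff_velocity_slice t).differentiable one_ne_zero x).hasDerivAt
  have hσx := ((h.contDiff_stress t).differentiable one_ne_zero x).hasDerivAt
  have hSu := (hS.differentiable two_ne_zero (u t x)).hasDerivAt
  have hS'u := ((ContDiff.deriv' (n := 1) hS).differentiable one_ne_zero (u t x)).hasDerivAt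
  have hentropy := hρt.fun_mul (hSu.comp t hut)
  have hflux : HasDerivAt (entropyFlux S ρ u σ t) _ x :=
    ((hρx.fun_mul hux).fun_mul (hSu.comp x hux)).fun_sub ((hS'u.comp x hux).fun_mul hσx)
  have hcontinuity := h.continuity t x
  have hmomentum := h.momentum t x
  rw [hρt.deriv, (hρx.fun_mul hux).deriv] at hcontinuity
  rw [(hρt.fun_mul hut).deriv, (hρx.fun_mul (hux.fun_pow 2)).deriv] at hmomentum
  push_cast at hmomentum
  refine (congrArg₂ (· + ·) hentropy.deriv hflux.deriv).trans ?_
  simp only [entropyDissipation, comp_apply]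
  linear_combination
    (S (u t x) - u t x * deriv S (u t x)) * hcontinuity + deriv S (u t x) * hmomentum

theorem integral_deriv_entropy (h : IsPressurelessFlow ρ u σ) (hS : ContDiff ℝ 2 S) (a b t : ℝ) :
    ∫ x in a..b, deriv (fun s => ρ s x * S (u s x)) t =
      entropyFlux S ρ u σ t a - entropyFlux S ρ u σ t b
        - ∫ x in a..b, entropyDissipation S u σ t x := by
  have hflux := h.contDiff_entropyFlux hS t
  have hflux_int := (hflux.continuous_deriv le_rfl).intervalIntegrable (μ := volume) a b
  calc ∫ x in a..b, deriv (fun s => ρ s x * S (u s x)) t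
      = ∫ x in a..b, -(deriv (entropyFlux S ρ u σ t) x + entropyDissipation S u σ t x) :=
        intervalIntegral.integral_congr fun x _ => by linear_combination h.entropy_balance hS t x
    _ = -((∫ x in a..b, deriv (entropyFlux S ρ u σ t) x)
          + ∫ x in a..b, entropyDissipation S u σ t x) := by
        rw [intervalIntegral.integral_neg, intervalIntegral.integral_add hflux_int
          ((h.continuous_entropyDissipation hS t).intervalIntegrable a b)]
    _ = entropyFlux S ρ u σ t a - entropyFlux S ρ u σ t b
          - ∫ x in a..b, entropyDissipation S u σ t x := by
        rw [intervalIntegral.integral_deriv_eq_sub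
          (fun x _ => hflux.differentiable one_ne_zero x) hflux_int]
        ring

theorem hasDerivAt_integral_entropy (h : IsPressurelessFlow ρ u σ) (hS : ContDiff ℝ 2 S)
    (a b t : ℝ) :
    HasDerivAt (fun s => ∫ x in a..b, ρ s x * S (u s x))
      (entropyFlux S ρ u σ t a - entropyFlux S ρ u σ t b
        - ∫ x in a..b, entropyDissipation S u σ t x) t := by
  have hentropy := h.contDiff_entropy (hS.of_le one_le_two)
  rw [← h.integral_deriv_entropy hS]
  exact hasDerivAt_intervalIntegral_of_continuous_deriv
    (fun t => hentropy.continuous.comp (Continuous.prodMk_right t))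
    (fun x => (hentropy.comp (contDiff_prodMk_left x)).differentiable one_ne_zero)
    (continuous_deriv_fst_of_contDiff_uncurry hentropy) a b t

end IsPressurelessFlow

theorem stmt18_general {L : ℝ} (hL : 0 ≤ L) {ρ u σ : ℝ → ℝ → ℝ} (h : IsPressurelessFlow ρ u σ)
    (hρ : ∀ t, Periodic (ρ t) L) (hu : ∀ t, Periodic (u t) L) (hσ : ∀ t, Periodic (σ t) L)
    (hdiss : ∀ t x, 0 ≤ σ t x * deriv (u t) x)
    {S : ℝ → ℝ} (hS : ContDiff ℝ 2 S) (hconv : ConvexOn ℝ univ S) :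
    Antitone fun t => ∫ x in (0 : ℝ)..L, ρ t x * S (u t x) := by
  have hderiv := h.hasDerivAt_integral_entropy hS 0 L
  refine antitone_of_deriv_nonpos (fun t => (hderiv t).differentiableAt) fun t => ?_
  have hflux : entropyFlux S ρ u σ t L = entropyFlux S ρ u σ t 0 :=
    (periodic_entropyFlux (hρ t) (hu t) (hσ t)).eq
  have hdissipation : 0 ≤ ∫ x in (0 : ℝ)..L, entropyDissipation S u σ t x :=
    intervalIntegral.integral_nonneg hL fun x _ =>
      entropyDissipation_nonneg (hS.differentiable two_ne_zero) hconv (hdiss t x)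
  rw [(hderiv t).deriv, hflux, sub_self, zero_sub]
  exact neg_nonpos.2 hdissipation

/-- Integrated entropy inequality: for smooth spatially periodic solutions of the
pressureless compressible Navier–Stokes system with nonnegative viscosity `λ(ρ)`,
the quantity `∫₀ᴸ ρ S(u) dx` is nonincreasing in time for every convex `C²` entropy. -/
theorem stmt18
    (L : ℝ) (hL : 0 < L)
    (lam : ℝ → ℝ) (hlam : ContDiff ℝ 1 lam)
    (hlamnn : ∀ s : ℝ, 0 < s → 0 ≤ lam s)
    (ρ u : ℝ → ℝ → ℝ)
    (hρ : ContDiff ℝ (⊤ : ℕ∞) (fun q : ℝ × ℝ => ρ q.1 q.2))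
    (hu : ContDiff ℝ (⊤ : ℕ∞) (fun q : ℝ × ℝ => u q.1 q.2))
    (hρper : ∀ t x, ρ t (x + L) = ρ t x)
    (huper : ∀ t x, u t (x + L) = u t x)
    (hρpos : ∀ t x, 0 < ρ t x)
    (hcont : ∀ t x,
      deriv (fun s => ρ s x) t + deriv (fun y => ρ t y * u t y) x = 0)
    (hmom : ∀ t x,
      deriv (fun s => ρ s x * u s x) t
        + deriv (fun y => ρ t y * (u t y) ^ 2) x
        - deriv (fun y => lam (ρ t y) * deriv (u t) y) x = 0) :
    ∀ S : ℝ → ℝ, ContDiff ℝ 2 S → ConvexOn ℝ Set.univ S →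
      Antitone (fun t => ∫ x in (0 : ℝ)..L, ρ t x * S (u t x)) := by
  have hflow : IsPressurelessFlow ρ u (viscousStress lam ρ u) :=
    ⟨contDiff_infty.1 hρ 1, contDiff_infty.1 hu 1, fun t => contDiff_viscousStress hlam
      (contDiff_infty.1 (hρ.comp (contDiff_prodMk_right t)) 1)
      (contDiff_infty.1 (hu.comp (contDiff_prodMk_right t)) 2), hcont, hmom⟩
  exact fun _ => stmt18_general hL.le hflow hρper huper
    (fun t => periodic_viscousStress (hρper t) (huper t))
    fun t x => viscousStress_mul_deriv_nonneg (hlamnn _ (hρpos t x))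
end
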